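/- (Hyperbolic cosine, convolution identity.) Let f(x) = 1/(π·cosh x). Then for every x ≠ 0, the convolution (f ∗ f)(x) = ∫_ℝ f(x − y) f(y) dy equals (4/π²) · x/(e^x − e^{−x}). -/

import Mathlib

open MeasureTheory

/-!
By the addition formula for `sinh`, the function `y ↦ log (cosh y) - log (cosh (x - y))` is a
primitive of `sinh x / (cosh (x - y) * cosh y)`. Since `log (cosh y) = |y| - log 2 + o(1)`, it tends
to `x` at `+∞` and to `-x` at `-∞`, so the integral of its derivative is `2 * x`.
-/

section

open Real Filter Topology

lemma one_add_sq_div_two_le_cosh (y : ℝ) : 1 + y ^ 2 / 2 ≤ cosh y := by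
  have hterm (n : ℕ) : 0 ≤ y ^ (2 * n) / ((2 * n).factorial : ℝ) :=
    div_nonneg ((even_two_mul n).pow_nonneg y) (Nat.cast_nonneg _)
  simpa [Finset.sum_range_succ] using
    sum_le_hasSum (Finset.range 2) (fun n _ ↦ hterm n) (hasSum_cosh y)

lemma continuous_inv_cosh : Continuous fun y : ℝ ↦ (cosh y)⁻¹ :=
  continuous_cosh.inv₀ fun y ↦ (cosh_pos y).ne'

lemma integrable_inv_cosh : Integrable fun y : ℝ ↦ (cosh y)⁻¹ := by
  refine (integrable_inv_one_add_sq.const_mul 2).mono'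
    continuous_inv_cosh.aestronglyMeasurable (ae_of_all _ fun y ↦ ?_)
  have hle : (1 + y ^ 2) / 2 ≤ cosh y := by linarith [one_add_sq_div_two_le_cosh y]
  calc ‖(cosh y)⁻¹‖ = (cosh y)⁻¹ := norm_of_nonneg (inv_nonneg.mpr (cosh_pos y).le)
    _ ≤ ((1 + y ^ 2) / 2)⁻¹ := inv_anti₀ (by positivity) hle
    _ = 2 * (1 + y ^ 2)⁻¹ := by rw [inv_div, div_eq_mul_inv]

lemma integrable_inv_cosh_sub_mul_inv_cosh (x : ℝ) :
    Integrable fun y : ℝ ↦ (cosh (x - y))⁻¹ * (cosh y)⁻¹ := by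
  refine integrable_inv_cosh.bdd_mul (c := 1)
    (continuous_inv_cosh.comp (continuous_sub_left x)).aestronglyMeasurable
    (ae_of_all _ fun y ↦ ?_)
  rw [norm_of_nonneg (inv_nonneg.mpr (cosh_pos _).le)]
  exact inv_le_one_of_one_le₀ (one_le_cosh _)

lemma hasDerivAt_log_cosh (y : ℝ) : HasDerivAt (fun y ↦ log (cosh y)) (sinh y / cosh y) y :=
  (hasDerivAt_cosh y).log (cosh_pos y).ne'

lemma hasDerivAt_log_cosh_sub_log_cosh_sub (x y : ℝ) :
    HasDerivAt (fun y ↦ log (cosh y) - log (cosh (x - y)))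
      (sinh x * ((cosh (x - y))⁻¹ * (cosh y)⁻¹)) y := by
  refine ((hasDerivAt_log_cosh y).sub
    ((hasDerivAt_log_cosh (x - y)).comp_const_sub x y)).congr_deriv ?_
  have hsinh : sinh x = sinh (x - y) * cosh y + cosh (x - y) * sinh y := by
    rw [← sinh_add, sub_add_cancel]
  have hy := (cosh_pos y).ne'
  have hxy := (cosh_pos (x - y)).ne'
  rw [hsinh]
  field_simp
  ring

lemma tendsto_log_cosh_sub_id_atTop :
    Tendsto (fun y ↦ log (cosh y) - y) atTop (𝓝 (-log 2)) := by
  have hexp : Tendsto (fun y : ℝ ↦ exp (-(2 * y))) atTop (𝓝 0) :=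
    tendsto_exp_neg_atTop_nhds_zero.comp (tendsto_id.const_mul_atTop two_pos)
  have hlog : Tendsto (fun y : ℝ ↦ log ((1 + exp (-(2 * y))) / 2)) atTop (𝓝 (-log 2)) := by
    simpa using ((hexp.const_add 1).div_const 2).log (by norm_num)
  refine hlog.congr fun y ↦ ?_
  have hcosh : (1 + exp (-(2 * y))) / 2 = cosh y / exp y := by
    rw [eq_div_iff (exp_pos y).ne', cosh_eq, div_mul_eq_mul_div, add_mul, one_mul, ← exp_add]
    ring_nf
  rw [hcosh, log_div (cosh_pos y).ne' (exp_pos y).ne', log_exp]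

lemma tendsto_log_cosh_sub_log_cosh_sub_atTop (x : ℝ) :
    Tendsto (fun y ↦ log (cosh y) - log (cosh (x - y))) atTop (𝓝 x) := by
  have hshift : Tendsto (fun y ↦ log (cosh (y - x)) - (y - x)) atTop (𝓝 (-log 2)) :=
    tendsto_log_cosh_sub_id_atTop.comp (tendsto_atTop_add_const_right atTop (-x) tendsto_id)
  have hdiff := (tendsto_log_cosh_sub_id_atTop.sub hshift).add_const x
  rw [sub_self, zero_add] at hdiff
  refine hdiff.congr fun y ↦ ?_
  rw [← cosh_neg (x - y), neg_sub]
  ring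

lemma tendsto_log_cosh_sub_log_cosh_sub_atBot (x : ℝ) :
    Tendsto (fun y ↦ log (cosh y) - log (cosh (x - y))) atBot (𝓝 (-x)) := by
  refine ((tendsto_log_cosh_sub_log_cosh_sub_atTop (-x)).comp tendsto_neg_atBot_atTop).congr
    fun y ↦ ?_
  rw [Function.comp_apply, cosh_neg, ← neg_sub', cosh_neg]

lemma sinh_mul_integral_inv_cosh_sub_mul_inv_cosh (x : ℝ) :
    sinh x * ∫ y, (cosh (x - y))⁻¹ * (cosh y)⁻¹ = 2 * x := by
  rw [← integral_const_mul, integral_of_hasDerivAt_of_tendsto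
    (hasDerivAt_log_cosh_sub_log_cosh_sub x)
    ((integrable_inv_cosh_sub_mul_inv_cosh x).const_mul (sinh x))
    (tendsto_log_cosh_sub_log_cosh_sub_atBot x) (tendsto_log_cosh_sub_log_cosh_sub_atTop x)]
  ring

end

/-- **hyperbolic cosine, convolution identity.** For `f(x) = 1/(π cosh x)`
and every `x ≠ 0`, `(f ∗ f)(x) = ∫_ℝ f(x − y) f(y) dy = (4/π²) · x/(e^x − e^{−x})`. -/
theorem statement13 (f : ℝ → ℝ) (hf : ∀ x : ℝ, f x = 1 / (Real.pi * Real.cosh x)) :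
    ∀ x : ℝ, x ≠ 0 →
      (∫ y : ℝ, f (x - y) * f y)
        = 4 / Real.pi ^ 2 * (x / (Real.exp x - Real.exp (-x))) := by
  intro x hx
  have hsinh : Real.sinh x ≠ 0 := Real.sinh_ne_zero.mpr hx
  have hexp : Real.exp x - Real.exp (-x) = 2 * Real.sinh x := by rw [Real.sinh_eq]; ring
  have hintegrand (y : ℝ) :
      f (x - y) * f y = 1 / Real.pi ^ 2 * ((Real.cosh (x - y))⁻¹ * (Real.cosh y)⁻¹) := by
    rw [hf, hf]; ring
  calc ∫ y, f (x - y) * f y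
      = 1 / Real.pi ^ 2 * ∫ y, (Real.cosh (x - y))⁻¹ * (Real.cosh y)⁻¹ := by
        simp only [hintegrand, integral_const_mul]
    _ = 1 / Real.pi ^ 2 * (2 * x / Real.sinh x) := by
        rw [eq_div_of_mul_eq hsinh
          ((mul_comm _ _).trans (sinh_mul_integral_inv_cosh_sub_mul_inv_cosh x))]
    _ = 4 / Real.pi ^ 2 * (x / (Real.exp x - Real.exp (-x))) := by
        rw [hexp]; field_simp; norm_num
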